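/- With the test graph T = (V,E) and the vertices v_0 = v_n, v_1, …, v_n as in the construction below, there is no partition π of V such that simultaneously (i) for every i ∈ {1,…,n} the vertices v_i and v_{i−1} lie in different blocks of π, and (ii) the graph of colored components GCC(T^π) is a tree. Equivalently, for every partition π of V such that GCC(T^π) is a tree, there exists i ∈ {1,…,n} with v_i and v_{i−1} in the same block of π. -/

import Mathlib

open MeasureTheory ProbabilityTheory Filter Matrix Asymptotics
open scoped BigOperators ENNReal
open scoped Classical

noncomputable section

/-- The diagonal projection `Δ` on `N × N` complex matrices. -/
def dproj {N : ℕ} (A : Matrix (Fin N) (Fin N) ℂ) : Matrix (Fin N) (Fin N) ℂ :=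
  Matrix.of fun i j => if i = j then A i j else 0

/-- The operator norm of a matrix acting on `ℓ²({1,…,N})`. -/
def matOpNorm {N : ℕ} (A : Matrix (Fin N) (Fin N) ℂ) : ℝ :=
  ‖Matrix.toEuclideanCLM (𝕜 := ℂ) A‖

/-! ### Multigraph combinatorics -/

section Graph

variable {V E : Type} (src tgt : E → V)

/-- Adjacency through an edge avoiding a forbidden set `F` of edges
(direction is ignored). -/
def adjOn (F : Set E) (a b : V) : Prop :=
  ∃ e, e ∉ F ∧ ((src e = a ∧ tgt e = b) ∨ (src e = b ∧ tgt e = a))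

/-- Reachability in the graph, using only edges outside `F`. -/
def reachOn (F : Set E) : V → V → Prop :=
  Relation.ReflTransGen (adjOn src tgt F)

lemma adjOn_symm (F : Set E) : Symmetric (adjOn src tgt F) := by
  rintro a b ⟨e, he, h⟩
  exact ⟨e, he, h.symm⟩

/-- The setoid of connectivity using edges outside `F`. -/
def connSetoid (F : Set E) : Setoid V :=
  ⟨reachOn src tgt F,
    ⟨fun _ => Relation.ReflTransGen.refl,
     fun h =>
       haveI : Std.Symm (adjOn src tgt F) := ⟨fun _ _ h' => adjOn_symm src tgt F h'⟩
       (Relation.ReflTransGen.stdSymm (r := adjOn src tgt F)).symm _ _ h,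
     fun h h' => Relation.ReflTransGen.trans h h'⟩⟩

/-- Number of connected components of the graph with the edges in `F` deleted. -/
def ncompAvoiding (F : Set E) : ℕ :=
  Nat.card (Quotient (connSetoid src tgt F))

/-- Number of connected components. -/
def ncomp : ℕ := ncompAvoiding src tgt ∅

/-- The graph is connected. -/
def IsConnectedGraph : Prop := ∀ a b : V, reachOn src tgt ∅ a b

/-- A cut edge (bridge): deleting it disconnects its endpoints. -/
def IsCutEdge (e : E) : Prop := ¬ reachOn src tgt {e} (src e) (tgt e)

/-- The set of cut edges. -/
def cutEdges : Set E := {e | IsCutEdge src tgt e}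

/-- The setoid whose classes are the two-edge connected components
(connected components after deleting all cut edges). -/
def teccSetoid : Setoid V := connSetoid src tgt (cutEdges src tgt)

/-- Degree, in the forest of two-edge connected components, of a
two-edge connected component: the number of cut edges incident to it. -/
def teccDeg (c : Quotient (teccSetoid src tgt)) : ℕ :=
  Nat.card {e : E // IsCutEdge src tgt e ∧
    (Quotient.mk (teccSetoid src tgt) (src e) = c ∨
      Quotient.mk (teccSetoid src tgt) (tgt e) = c)}

/-- `𝔣(G)`: the number of leaves of the forest of two-edge connected components,
single-vertex trees of the forest counting twice. -/
def frak : ℕ :=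
  Nat.card {c : Quotient (teccSetoid src tgt) // teccDeg src tgt c = 1} +
    2 * Nat.card {c : Quotient (teccSetoid src tgt) // teccDeg src tgt c = 0}

end Graph

/-! ### Graph monomials -/

/-- A graph monomial: a finite directed multigraph with two roots and edges
labelled by a family index in `Fin L` and an index in `K`.  (Connectedness is
required separately via `IsConnectedGraph`.) -/
structure GraphMonomial (L : ℕ) (K : Type) where
  V : Type
  E : Type
  fintV : Fintype V
  fintE : Fintype E
  src : E → V
  tgt : E → V
  vin : V
  vout : V
  labL : E → Fin L
  labK : E → K

attribute [instance] GraphMonomial.fintV GraphMonomial.fintE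

namespace GraphMonomial

variable {L : ℕ} {K : Type} (g : GraphMonomial L K)

/-- Evaluation of a graph monomial in a collection of matrices. -/
def eval {N : ℕ} (A : Fin L → K → Matrix (Fin N) (Fin N) ℂ) :
    Matrix (Fin N) (Fin N) ℂ :=
  Matrix.of fun i j => ∑ φ : g.V → Fin N,
    if φ g.vin = j ∧ φ g.vout = i then
      ∏ e : g.E, A (g.labL e) (g.labK e) (φ (g.tgt e)) (φ (g.src e))
    else 0

/-- The starting vertex of a step `(e, b)`: `e` traversed forward if `b = true`,
backward otherwise. -/
def stepSrc (s : g.E × Bool) : g.V := if s.2 then g.src s.1 else g.tgt s.1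

/-- The ending vertex of a step. -/
def stepTgt (s : g.E × Bool) : g.V := if s.2 then g.tgt s.1 else g.src s.1

/-- A simple cycle of the underlying undirected multigraph: a nonempty cyclic
sequence of steps with pairwise distinct edges and pairwise distinct vertices. -/
def IsSimpleCycle (c : List (g.E × Bool)) : Prop :=
  ∃ h : c ≠ [],
    (∀ i : Fin c.length,
      g.stepTgt (c.get i) =
        g.stepSrc (c.get ⟨((i : ℕ) + 1) % c.length,
          Nat.mod_lt _ (List.length_pos_iff.mpr h)⟩)) ∧
    (c.map Prod.fst).Nodup ∧ (c.map g.stepSrc).Nodup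

/-- A cycle is directed when it traverses all its edges consistently with
their orientations (one way or the other). -/
def IsDirectedCycleList (c : List (g.E × Bool)) : Prop :=
  (∀ s ∈ c, s.2 = true) ∨ (∀ s ∈ c, s.2 = false)

/-- `S` is the edge set of some simple cycle. -/
def IsCycleEdgeSet (S : Finset g.E) : Prop :=
  ∃ c, g.IsSimpleCycle c ∧ (c.map Prod.fst).toFinset = S

/-- The underlying graph is an oriented cactus: it is connected, every simple
cycle is directed, and every edge belongs to exactly one simple cycle. -/
def IsOrientedCactus : Prop :=
  IsConnectedGraph g.src g.tgt ∧
  (∀ c, g.IsSimpleCycle c → g.IsDirectedCycleList c) ∧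
  (∀ e : g.E, ∃! S : Finset g.E, g.IsCycleEdgeSet S ∧ e ∈ S)

/-- A cactus-type monomial: an oriented cactus whose input and output coincide. -/
def IsCactusType : Prop := g.vin = g.vout ∧ g.IsOrientedCactus

/-- A member of `ℱ`: a directed simple path (oriented from the input, at the far
right, to the output, at the far left) with oriented cacti attached to the
vertices of the path (the root of each cactus being a path vertex). -/
def IsPathCactusType : Prop :=
  IsConnectedGraph g.src g.tgt ∧
  ∃ (d : ℕ) (v : Fin (d + 1) → g.V) (f : Fin d → g.E),
    Function.Injective v ∧ Function.Injective f ∧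
    (∀ j : Fin d, g.src (f j) = v j.succ ∧ g.tgt (f j) = v j.castSucc) ∧
    g.vin = v (Fin.last d) ∧ g.vout = v 0 ∧
    (∀ c, g.IsSimpleCycle c → g.IsDirectedCycleList c ∧ ∀ s ∈ c, s.1 ∉ Set.range f) ∧
    (∀ e : g.E, e ∉ Set.range f →
      ∃! S : Finset g.E, g.IsCycleEdgeSet S ∧ e ∈ S) ∧
    (∀ w : g.V, ∃! j : Fin (d + 1), reachOn g.src g.tgt (Set.range f) w (v j))

end GraphMonomial
/-! ### Random matrices, expectations, test graphs -/

/-- The entries of the random matrix `X` are measurable. -/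
def EntriesMeasurable {N : ℕ} {Ω : Type} [MeasurableSpace Ω]
    (X : Ω → Matrix (Fin N) (Fin N) ℂ) : Prop :=
  ∀ i j, Measurable fun ω => X ω i j

/-- The entries of the random matrix `X` are essentially bounded. -/
def EntriesBounded {N : ℕ} {Ω : Type} [MeasurableSpace Ω] (μ : Measure Ω)
    (X : Ω → Matrix (Fin N) (Fin N) ℂ) : Prop :=
  ∃ C : ℝ, ∀ᵐ ω ∂μ, ∀ i j, ‖X ω i j‖ ≤ C

/-- The σ-algebra generated by the entries of the matrices of a family. -/
def famSigma {N : ℕ} {Ω K : Type} [MeasurableSpace Ω]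
    (A : K → Ω → Matrix (Fin N) (Fin N) ℂ) : MeasurableSpace Ω :=
  ⨆ k : K, ⨆ i : Fin N, ⨆ j : Fin N,
    MeasurableSpace.comap (fun ω => A k ω i j) inferInstance

/-- Permutation invariance of a family of `N × N` random matrices. -/
def PermInvariant {N : ℕ} {Ω K : Type} [MeasurableSpace Ω] (μ : Measure Ω)
    (A : K → Ω → Matrix (Fin N) (Fin N) ℂ) : Prop :=
  ∀ σ : Equiv.Perm (Fin N),
    Measure.map (fun ω => fun (k : K) (i j : Fin N) => A k ω (σ i) (σ j)) μ =
      Measure.map (fun ω => fun (k : K) (i j : Fin N) => A k ω i j) μ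

/-- A test graph with matrix-valued edge labels. -/
structure TestGraph (N : ℕ) (Ω : Type) where
  V : Type
  E : Type
  fintV : Fintype V
  fintE : Fintype E
  src : E → V
  tgt : E → V
  lab : E → Ω → Matrix (Fin N) (Fin N) ℂ

attribute [instance] TestGraph.fintV TestGraph.fintE

namespace TestGraph

variable {N : ℕ} {Ω : Type} [MeasurableSpace Ω]

/-- Number of connected components `c(T)` of a test graph. -/
def ncc (T : TestGraph N Ω) : ℕ := ncomp T.src T.tgt

/-- The (unnormalized) trace observable of a test graph. -/
def tauInner (T : TestGraph N Ω) (ω : Ω) : ℂ :=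
  ∑ φ : T.V → Fin N, ∏ e : T.E, T.lab e ω (φ (T.tgt e)) (φ (T.src e))

/-- The (unnormalized) injective trace observable of a test graph. -/
def tau0Inner (T : TestGraph N Ω) (ω : Ω) : ℂ :=
  ∑ φ : T.V → Fin N,
    if Function.Injective φ then ∏ e : T.E, T.lab e ω (φ (T.tgt e)) (φ (T.src e)) else 0

/-- `τ_N[T]`. -/
def tau (T : TestGraph N Ω) (μ : Measure Ω) : ℂ :=
  ((N : ℂ) ^ T.ncc)⁻¹ * ∫ ω, T.tauInner ω ∂μ

/-- `τ⁰_N[T]`. -/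
def tau0 (T : TestGraph N Ω) (μ : Measure Ω) : ℂ :=
  ((N : ℂ) ^ T.ncc)⁻¹ * ∫ ω, T.tau0Inner ω ∂μ

/-- The quotient test graph `T^π` associated with a partition `π` of the
vertices of `T`. -/
def quot (T : TestGraph N Ω) (π : Setoid T.V) : TestGraph N Ω where
  V := Quotient π
  E := T.E
  fintV := @Quotient.fintype _ T.fintV π fun _ _ => Classical.propDecidable _
  fintE := T.fintE
  src := fun e => Quotient.mk π (T.src e)
  tgt := fun e => Quotient.mk π (T.tgt e)
  lab := T.lab

end TestGraph

/-- Monomial `D₀ X_{k(1)} D₁ ⋯ X_{k(d)} D_d` evaluated in a family of matrices: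
the coefficients are given as an arbitrary function `D : ℕ → Matrix`. -/
def monomialEval {K : Type} {N : ℕ} (A : K → Matrix (Fin N) (Fin N) ℂ)
    (dd : ℕ) (kk : ℕ → K) (D : ℕ → Matrix (Fin N) (Fin N) ℂ) :
    Matrix (Fin N) (Fin N) ℂ :=
  D 0 * (List.ofFn fun j : Fin dd => A (kk ((j : ℕ) + 1)) * D ((j : ℕ) + 1)).prod

/-- The centered product `(M₁ - ΔM₁)(M₂ - ΔM₂)⋯(Mₙ - ΔMₙ)`. -/
def centeredProd {N n : ℕ} (M : Fin n → Matrix (Fin N) (Fin N) ℂ) :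
    Matrix (Fin N) (Fin N) ℂ :=
  (List.ofFn fun i : Fin n => M i - dproj (M i)).prod

/-- Mutual independence of the families `A 1, …, A L` of random matrices. -/
def IndepFamilies {Ω K : Type} {L : ℕ} [MeasurableSpace Ω] (μ : Measure Ω)
    (A : (N : ℕ) → Fin L → K → Ω → Matrix (Fin N) (Fin N) ℂ) : Prop :=
  ∀ N : ℕ, ProbabilityTheory.iIndep (fun ℓ : Fin L => famSigma (A N ℓ)) μ

/-- Uniform boundedness, in operator norm, of families of random matrices. -/
def UnifOpNormBound {Ω K : Type} {L : ℕ} [MeasurableSpace Ω] (μ : Measure Ω)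
    (A : (N : ℕ) → Fin L → K → Ω → Matrix (Fin N) (Fin N) ℂ) : Prop :=
  ∃ C : ℝ, ∀ (N : ℕ) (ℓ : Fin L) (k : K), ∀ᵐ ω ∂μ, matOpNorm (A N ℓ k ω) ≤ C

/-- The growth bound (MS) for the family `A · ℓ`:
for all graph monomials `g₁, …, gₘ` labelled in the single family `ℓ` and having
equal input and output, `E[∏ᵢ Tr gᵢ(A_N)] = O(N^{Σᵢ 𝔣(gᵢ)/2})` as `N → ∞`. -/
def MSBound {Ω K : Type} {L : ℕ} [MeasurableSpace Ω] (μ : Measure Ω)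
    (A : (N : ℕ) → Fin L → K → Ω → Matrix (Fin N) (Fin N) ℂ) (ℓ : Fin L) : Prop :=
  ∀ (m : ℕ), 1 ≤ m → ∀ gs : Fin m → GraphMonomial L K,
    (∀ i : Fin m, IsConnectedGraph (gs i).src (gs i).tgt ∧
      (∀ e, (gs i).labL e = ℓ) ∧ (gs i).vin = (gs i).vout) →
    (fun N : ℕ => ∫ ω, ∏ i : Fin m,
        Matrix.trace ((gs i).eval fun ℓ' k => A N ℓ' k ω) ∂μ)
      =O[atTop] fun N : ℕ => (N : ℝ) ^ ((∑ i : Fin m, (frak (gs i).src (gs i).tgt : ℝ)) / 2)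
/-- The monomial `g₀(A) X_{k(1)} g₁(A) ⋯ X_{k(d)} g_d(A)` with graph-monomial
coefficients, evaluated at the family `A ℓi`. -/
def cactusMonomialEval {L : ℕ} {K : Type} {N : ℕ}
    (A : Fin L → K → Matrix (Fin N) (Fin N) ℂ) (ℓi : Fin L) (dd : ℕ)
    (kk : ℕ → K) (gg : ℕ → GraphMonomial L K) : Matrix (Fin N) (Fin N) ℂ :=
  (gg 0).eval A *
    (List.ofFn fun j : Fin dd =>
      A ℓi (kk ((j : ℕ) + 1)) * (gg ((j : ℕ) + 1)).eval A).prod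
/-! ### The test graph `T` built from the monomials `t_1, …, t_n` -/

section Construction

variable {L : ℕ} {K : Type}

/-- Cyclic successor in `Fin n`. -/
def nxt {n : ℕ} (i : Fin n) : Fin n := ⟨((i : ℕ) + 1) % n, Nat.mod_lt _ i.pos⟩

/-- Vertices of the disjoint union of the graph monomials `t_1, …, t_n`:
for each `i`, the path vertices of `t_i` are the roots of the attached cacti
`g_{0,i}, …, g_{d_i,i}`. -/
def BigV (n : ℕ) (d : Fin n → ℕ) (g : Fin n → ℕ → GraphMonomial L K) : Type :=
  Σ i : Fin n, Σ j : Fin (d i + 1), (g i (j : ℕ)).V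

instance (n : ℕ) (d : Fin n → ℕ) (g : Fin n → ℕ → GraphMonomial L K) :
    Fintype (BigV n d g) := by
  unfold BigV; infer_instance

/-- Edges: the edges of the cacti, plus the path edges (the edge `(i, j)` goes
from the path vertex `u_{i,j+1}` to `u_{i,j}` and carries the label
`(ℓ_i, k_i(j+1))`). -/
def BigE (n : ℕ) (d : Fin n → ℕ) (g : Fin n → ℕ → GraphMonomial L K) : Type :=
  (Σ i : Fin n, Σ j : Fin (d i + 1), (g i (j : ℕ)).E) ⊕ (Σ i : Fin n, Fin (d i))

instance (n : ℕ) (d : Fin n → ℕ) (g : Fin n → ℕ → GraphMonomial L K) :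
    Fintype (BigE n d g) := by
  unfold BigE; infer_instance

/-- The path vertex `u_{i,j}`, i.e. the root of the cactus `g_{j,i}`. -/
def pathVtx (n : ℕ) (d : Fin n → ℕ) (g : Fin n → ℕ → GraphMonomial L K)
    (i : Fin n) (j : Fin (d i + 1)) : BigV n d g :=
  ⟨i, j, (g i (j : ℕ)).vin⟩

/-- The input vertex of `t_i`. -/
def inVtx (n : ℕ) (d : Fin n → ℕ) (g : Fin n → ℕ → GraphMonomial L K)
    (i : Fin n) : BigV n d g :=
  pathVtx n d g i (Fin.last (d i))

/-- The output vertex of `t_i`. -/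
def outVtx (n : ℕ) (d : Fin n → ℕ) (g : Fin n → ℕ → GraphMonomial L K)
    (i : Fin n) : BigV n d g :=
  pathVtx n d g i 0

/-- The setoid identifying, for each `i` (cyclically), the input of `t_i` with
the output of `t_{i+1}`. -/
def glueSetoid (n : ℕ) (d : Fin n → ℕ) (g : Fin n → ℕ → GraphMonomial L K) :
    Setoid (BigV n d g) :=
  ⟨Relation.EqvGen fun x y =>
      ∃ i : Fin n, x = inVtx n d g i ∧ y = outVtx n d g (nxt i),
   Relation.EqvGen.is_equivalence _⟩

/-- Source map of the glued test graph `T`. -/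
def bigSrc (n : ℕ) (d : Fin n → ℕ) (g : Fin n → ℕ → GraphMonomial L K) :
    BigE n d g → Quotient (glueSetoid n d g) := fun e =>
  match e with
  | Sum.inl ⟨i, j, e'⟩ =>
      Quotient.mk (glueSetoid n d g) ⟨i, j, (g i (j : ℕ)).src e'⟩
  | Sum.inr ⟨i, j⟩ =>
      Quotient.mk (glueSetoid n d g) (pathVtx n d g i j.succ)

/-- Target map of the glued test graph `T`. -/
def bigTgt (n : ℕ) (d : Fin n → ℕ) (g : Fin n → ℕ → GraphMonomial L K) :
    BigE n d g → Quotient (glueSetoid n d g) := fun e =>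
  match e with
  | Sum.inl ⟨i, j, e'⟩ =>
      Quotient.mk (glueSetoid n d g) ⟨i, j, (g i (j : ℕ)).tgt e'⟩
  | Sum.inr ⟨i, j⟩ =>
      Quotient.mk (glueSetoid n d g) (pathVtx n d g i j.castSucc)

/-- The family index (color) carried by each edge of `T`. -/
def bigCol (n : ℕ) (ℓv : Fin n → Fin L) (d : Fin n → ℕ)
    (g : Fin n → ℕ → GraphMonomial L K) : BigE n d g → Fin L := fun e =>
  match e with
  | Sum.inl ⟨i, j, e'⟩ => (g i (j : ℕ)).labL e'
  | Sum.inr ⟨i, _⟩ => ℓv i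

/-- The vertex `v_i` of `T` (the class of the input of `t_i`). -/
def vCls (n : ℕ) (d : Fin n → ℕ) (g : Fin n → ℕ → GraphMonomial L K)
    (i : Fin n) : Quotient (glueSetoid n d g) :=
  Quotient.mk (glueSetoid n d g) (inVtx n d g i)

/-- The test graph `T`, with the matrix `A_{N,ℓ}^{(k)}` assigned to each edge
labelled `(ℓ, k)`. -/
def bigTG (n : ℕ) (ℓv : Fin n → Fin L) (d : Fin n → ℕ) (kv : Fin n → ℕ → K)
    (g : Fin n → ℕ → GraphMonomial L K) {Ω : Type} (N : ℕ)
    (A : Fin L → K → Ω → Matrix (Fin N) (Fin N) ℂ) : TestGraph N Ω where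
  V := Quotient (glueSetoid n d g)
  E := BigE n d g
  fintV := @Quotient.fintype _ inferInstance (glueSetoid n d g)
    fun _ _ => Classical.propDecidable _
  fintE := inferInstance
  src := bigSrc n d g
  tgt := bigTgt n d g
  lab := fun e =>
    match e with
    | Sum.inl ⟨i, j, e'⟩ => fun ω => A ((g i (j : ℕ)).labL e') ((g i (j : ℕ)).labK e') ω
    | Sum.inr ⟨i, j⟩ => fun ω => A (ℓv i) (kv i ((j : ℕ) + 1)) ω

end Construction
/-! ### The graph of colored components -/

section GCC

variable {V E : Type} (src tgt : E → V) {L : ℕ} (col : E → Fin L)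

/-- Connectivity using only edges of color `ℓ`. -/
def colorSetoid (ℓ : Fin L) : Setoid V :=
  connSetoid src tgt {e | col e ≠ ℓ}

/-- The colored components: maximal connected subgraphs all of whose edges
have one single color.  Such a component is encoded by its color together
with the corresponding class of vertices (which is required to contain at
least one edge of that color). -/
def ColoredComp : Type :=
  {p : Σ ℓ : Fin L, Quotient (colorSetoid src tgt col ℓ) //
    ∃ e, col e = p.1 ∧ Quotient.mk (colorSetoid src tgt col p.1) (src e) = p.2}

/-- Membership of a vertex in a colored component. -/
def memCC (v : V) (S : ColoredComp src tgt col) : Prop :=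
  Quotient.mk (colorSetoid src tgt col S.1.1) v = S.1.2

/-- The graph of colored components `GCC`: the undirected bipartite graph on
the colored components and the vertices, a vertex being joined to each colored
component it belongs to. -/
def gccGraph : SimpleGraph (ColoredComp src tgt col ⊕ V) where
  Adj x y :=
    (∃ S v, x = Sum.inl S ∧ y = Sum.inr v ∧ memCC src tgt col v S) ∨
    (∃ S v, x = Sum.inr v ∧ y = Sum.inl S ∧ memCC src tgt col v S)
  symm := by
    constructor
    rintro x y (⟨S, v, hx, hy, hm⟩ | ⟨S, v, hx, hy, hm⟩)
    · exact Or.inr ⟨S, v, hy, hx, hm⟩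
    · exact Or.inl ⟨S, v, hy, hx, hm⟩
  loopless := by
    constructor
    rintro x (⟨S, v, rfl, hy, hm⟩ | ⟨S, v, rfl, hy, hm⟩) <;> simp at hy

end GCC

/-!
In `T^π` the output and the input of `t_i` are joined by the path edges of `t_i`, all of color
`ℓ_i`; so if `π` separated `v_{i-1}` from `v_i` for every `i`, these two vertices would lie in a
common colored component `S_i`.  Consecutive `S_i` have different colors, whence
`v_0, S_1, v_1, S_2, …, S_n, v_n = v_0` would be a closed walk of `GCC(T^π)` that never backtracks
except possibly at its base point.  An acyclic graph has no such walk, since there a walk without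
backtracking is a path.
-/

section NonBacktracking

variable {X : Type*} {G : SimpleGraph X}

lemma exists_walk_edges_eq_map_range (y : ℕ → X) (m : ℕ)
    (hadj : ∀ k < m, G.Adj (y k) (y (k + 1))) :
    ∃ p : G.Walk (y 0) (y m), p.edges = (List.range m).map fun k => s(y k, y (k + 1)) := by
  induction m with
  | zero => exact ⟨.nil, rfl⟩
  | succ m ih =>
    obtain ⟨p, hp⟩ := ih fun k hk => hadj k (hk.trans m.lt_succ_self)
    refine ⟨p.concat (hadj m m.lt_succ_self), ?_⟩
    rw [SimpleGraph.Walk.edges_concat, hp, List.range_succ, List.map_append,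
      List.concat_eq_append, List.map_singleton]

theorem ne_of_isAcyclic_of_forall_ne_add_two (hG : G.IsAcyclic) (y : ℕ → X) {m : ℕ} (hm : m ≠ 0)
    (hadj : ∀ k < m, G.Adj (y k) (y (k + 1))) (hne : ∀ k, k + 1 < m → y k ≠ y (k + 2)) :
    y 0 ≠ y m := by
  obtain ⟨p, hp⟩ := exists_walk_edges_eq_map_range y m hadj
  have hchain : p.edges.IsChain (· ≠ ·) := by
    rw [hp, List.isChain_map, List.isChain_range]
    intro k hk hedge
    rw [Sym2.eq_swap, Sym2.congr_right] at hedge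
    exact hne k (by omega) hedge
  have hlength : p.length = m := by
    rw [← SimpleGraph.Walk.length_edges, hp, List.length_map, List.length_range]
  have hpath : p.IsPath := (hG.isPath_iff_isChain p).2 hchain
  intro hclosed
  have hnil : p.length = 0 := SimpleGraph.Walk.length_eq_zero_iff.2 (hpath.nil_iff_eq.2 hclosed)
  exact hm (hlength.symm.trans hnil)

end NonBacktracking

section ColoredComponents

variable {V E : Type} {src tgt : E → V} {L : ℕ} {col : E → Fin L}

lemma colorSetoid_map {W : Type} (f : V → W) {ℓ : Fin L} {v w : V}
    (h : colorSetoid src tgt col ℓ v w) :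
    colorSetoid (fun e => f (src e)) (fun e => f (tgt e)) col ℓ (f v) (f w) := by
  refine Relation.ReflTransGen.lift f ?_ _ _ h
  rintro a b ⟨e, he, hab⟩
  exact ⟨e, he, hab.imp (.imp (congrArg f) (congrArg f)) (.imp (congrArg f) (congrArg f))⟩

lemma colorSetoid_src_tgt (e : E) : colorSetoid src tgt col (col e) (src e) (tgt e) :=
  .single ⟨e, not_not_intro rfl, .inl ⟨rfl, rfl⟩⟩

lemma exists_coloredComp_of_ne {ℓ : Fin L} {v w : V} (h : colorSetoid src tgt col ℓ v w)
    (hne : v ≠ w) :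
    ∃ S : ColoredComp src tgt col, S.1.1 = ℓ ∧ memCC src tgt col v S ∧ memCC src tgt col w S := by
  have hedge : ∃ e, col e = ℓ ∧ colorSetoid src tgt col ℓ (src e) v := by
    obtain rfl | ⟨u, ⟨e, he, hvu⟩, -⟩ := Relation.ReflTransGen.cases_head h
    · exact absurd rfl hne
    obtain rfl : col e = ℓ := not_not.1 he
    refine ⟨e, rfl, ?_⟩
    obtain ⟨rfl, -⟩ | ⟨-, rfl⟩ := hvu
    · exact Setoid.refl' _ _
    · exact colorSetoid_src_tgt e
  obtain ⟨e, he, hev⟩ := hedge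
  exact ⟨⟨⟨ℓ, Quotient.mk _ v⟩, e, he, Quotient.sound hev⟩, rfl, rfl,
    Quotient.sound (Setoid.symm' _ h)⟩

lemma gccGraph_adj_inl_inr {S : ColoredComp src tgt col} {v : V} :
    (gccGraph src tgt col).Adj (.inl S) (.inr v) ↔ memCC src tgt col v S := by
  simp [gccGraph]

theorem ne_of_isAcyclic_gccGraph (hG : (gccGraph src tgt col).IsAcyclic)
    (x : ℕ → V) (S : ℕ → ColoredComp src tgt col) {m : ℕ} (hm : m ≠ 0)
    (hmem : ∀ k < m, memCC src tgt col (x k) (S k))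
    (hmem_succ : ∀ k < m, memCC src tgt col (x (k + 1)) (S k))
    (hx : ∀ k < m, x k ≠ x (k + 1)) (hS : ∀ k, k + 1 < m → S k ≠ S (k + 1)) :
    x 0 ≠ x m := by
  let y : ℕ → ColoredComp src tgt col ⊕ V := fun k =>
    if Even k then .inr (x (k / 2)) else .inl (S (k / 2))
  have y_even (k : ℕ) : y (2 * k) = .inr (x k) := by simp [y]
  have y_odd (k : ℕ) : y (2 * k + 1) = .inl (S k) := by
    simp [y, show (2 * k + 1) / 2 = k by omega]
  have hadj : ∀ k < 2 * m, (gccGraph src tgt col).Adj (y k) (y (k + 1)) := by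
    intro k hk
    obtain ⟨k, rfl | rfl⟩ := k.even_or_odd'
    · rw [y_even, y_odd]
      exact (gccGraph_adj_inl_inr.2 (hmem k (by omega))).symm
    · rw [y_odd, show 2 * k + 1 + 1 = 2 * (k + 1) by ring, y_even]
      exact gccGraph_adj_inl_inr.2 (hmem_succ k (by omega))
  have hne : ∀ k, k + 1 < 2 * m → y k ≠ y (k + 2) := by
    intro k hk
    obtain ⟨k, rfl | rfl⟩ := k.even_or_odd'
    · rw [y_even, show 2 * k + 2 = 2 * (k + 1) by ring, y_even]
      exact Sum.inr_injective.ne (hx k (by omega))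
    · rw [y_odd, show 2 * k + 1 + 2 = 2 * (k + 1) + 1 by ring, y_odd]
      exact Sum.inl_injective.ne (hS k (by omega))
  have hends : y (2 * 0) ≠ y (2 * m) :=
    ne_of_isAcyclic_of_forall_ne_add_two hG y (by omega) hadj hne
  rw [y_even, y_even] at hends
  exact fun h => hends (congrArg _ h)

end ColoredComponents

section CyclicIndices

variable {n : ℕ}

lemma nxt_eq_add_one [NeZero n] (i : Fin n) : nxt i = i + 1 := by
  ext
  simp [nxt, Fin.val_add]

lemma nxt_surjective : Function.Surjective (nxt : Fin n → Fin n) := fun i => by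
  have : NeZero n := ⟨i.pos.ne'⟩
  exact ⟨i - 1, by rw [nxt_eq_add_one, sub_add_cancel]⟩

lemma nxt_ofNat [NeZero n] (k : ℕ) : nxt (Fin.ofNat n k) = Fin.ofNat n (k + 1) := by
  ext
  simp [nxt]

theorem exists_eq_nxt_of_isAcyclic_gccGraph [NeZero n] {V E : Type} {src tgt : E → V} {L : ℕ}
    {col : E → Fin L} (hG : (gccGraph src tgt col).IsAcyclic) (c : Fin n → Fin L)
    (hc : ∀ (i : ℕ) (h : i + 1 < n), c ⟨i, Nat.lt_of_succ_lt h⟩ ≠ c ⟨i + 1, h⟩)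
    (x : Fin n → V) (hx : ∀ i, colorSetoid src tgt col (c i) (x i) (x (nxt i))) :
    ∃ i, x i = x (nxt i) := by
  by_contra! hne
  choose S hcol hmem hmem_nxt using fun i => exists_coloredComp_of_ne (hx i) (hne i)
  refine ne_of_isAcyclic_gccGraph hG (fun k => x (Fin.ofNat n k)) (fun k => S (Fin.ofNat n k))
    (NeZero.ne n) (fun k _ => hmem _) (fun k _ => ?_) (fun k _ => ?_) (fun k hk hS => ?_) ?_
  · simpa only [nxt_ofNat] using hmem_nxt (Fin.ofNat n k)
  · simpa only [nxt_ofNat] using hne (Fin.ofNat n k)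
  · have hck : c (Fin.ofNat n k) = c (Fin.ofNat n (k + 1)) := by rw [← hcol, ← hcol, hS]
    refine hc k hk ?_
    simpa only [Fin.ofNat, Nat.mod_eq_of_lt hk, Nat.mod_eq_of_lt (Nat.lt_of_succ_lt hk)] using hck
  · simp [Fin.ofNat]

end CyclicIndices

section GluedGraph

variable {L : ℕ} {K : Type} {n : ℕ} {d : Fin n → ℕ} {g : Fin n → ℕ → GraphMonomial L K}

lemma mk_outVtx_nxt (i : Fin n) :
    Quotient.mk (glueSetoid n d g) (outVtx n d g (nxt i)) = vCls n d g i :=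
  Quotient.sound (.symm _ _ (.rel _ _ ⟨i, rfl, rfl⟩))

lemma colorSetoid_outVtx_pathVtx (ℓv : Fin n → Fin L) (i : Fin n) (j : Fin (d i + 1)) :
    colorSetoid (bigSrc n d g) (bigTgt n d g) (bigCol n ℓv d g) (ℓv i)
      (Quotient.mk _ (outVtx n d g i)) (Quotient.mk _ (pathVtx n d g i j)) := by
  induction j using Fin.induction with
  | zero => exact Setoid.refl' _ _
  | succ j ih =>
    have hstep := colorSetoid_src_tgt (src := bigSrc n d g) (tgt := bigTgt n d g)
      (col := bigCol n ℓv d g) (.inr ⟨i, j⟩)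
    exact Setoid.trans' _ ih (Setoid.symm' _ hstep)

lemma colorSetoid_outVtx_outVtx_nxt (ℓv : Fin n → Fin L) (i : Fin n) :
    colorSetoid (bigSrc n d g) (bigTgt n d g) (bigCol n ℓv d g) (ℓv i)
      (Quotient.mk _ (outVtx n d g i)) (Quotient.mk _ (outVtx n d g (nxt i))) := by
  rw [mk_outVtx_nxt]
  exact colorSetoid_outVtx_pathVtx ℓv i (Fin.last (d i))

theorem gcc_tree_forces_identification_general [NeZero n] (ℓv : Fin n → Fin L)
    (hadj : ∀ (i : ℕ) (h1 : i + 1 < n),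
      ℓv ⟨i, Nat.lt_of_succ_lt h1⟩ ≠ ℓv ⟨i + 1, h1⟩)
    (π : Setoid (Quotient (glueSetoid n d g)))
    (hG : (gccGraph (fun e => Quotient.mk π (bigSrc n d g e))
        (fun e => Quotient.mk π (bigTgt n d g e)) (bigCol n ℓv d g)).IsAcyclic) :
    ∃ i : Fin n, π.r (vCls n d g (nxt i)) (vCls n d g i) := by
  obtain ⟨i, hi⟩ := exists_eq_nxt_of_isAcyclic_gccGraph hG ℓv hadj
    (fun i => Quotient.mk π (Quotient.mk _ (outVtx n d g i)))
    fun i => colorSetoid_map (Quotient.mk π) (colorSetoid_outVtx_outVtx_nxt ℓv i)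
  obtain ⟨i, rfl⟩ := nxt_surjective i
  refine ⟨i, Setoid.symm' _ ?_⟩
  rw [← mk_outVtx_nxt, ← mk_outVtx_nxt]
  exact Quotient.exact hi

end GluedGraph

/-- Lemma 4.6.
For the test graph `T` built from `t_1, …, t_n`, there is no partition `π` of
its vertex set separating `v_i` from `v_{i-1}` for every `i` and such that the
graph of colored components of `T^π` is a tree: equivalently, if
`GCC(T^π)` is a tree, then `v_i` and `v_{i-1}` lie in a common block of `π`
for some `i`. -/
theorem gcc_tree_forces_identification
    {K : Type} [Nonempty K] [Finite K] {L : ℕ} (hL : 1 ≤ L)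
    (n : ℕ) (hn : 2 ≤ n) (ℓv : Fin n → Fin L)
    (hadj : ∀ (i : ℕ) (h1 : i + 1 < n),
      ℓv ⟨i, Nat.lt_of_succ_lt h1⟩ ≠ ℓv ⟨i + 1, h1⟩)
    (d : Fin n → ℕ) (hd : ∀ i, 1 ≤ d i) (kv : Fin n → ℕ → K)
    (g : Fin n → ℕ → GraphMonomial L K)
    (hg : ∀ (i : Fin n) (j : ℕ), j ≤ d i → (g i j).IsCactusType)
    (π : Setoid (Quotient (glueSetoid n d g)))
    (htree : (gccGraph (fun e => Quotient.mk π (bigSrc n d g e))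
        (fun e => Quotient.mk π (bigTgt n d g e)) (bigCol n ℓv d g)).IsTree) :
    ∃ i : Fin n, π.r (vCls n d g (nxt i)) (vCls n d g i) := by
  have : NeZero n := ⟨by omega⟩
  exact gcc_tree_forces_identification_general ℓv hadj π htree.isAcyclic
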